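/- Under the static spherically symmetric Einstein equations with the NEC, asymptotic flatness, and a regular horizon at r_h, the ADM mass satisfies the Penrose inequality 2M ≥ √(𝒜/(4π)), i.e. 2M ≥ r_h. -/

import Mathlib

open Real Filter

/-!
Write `N = e^{-χ/2}`. The Einstein equations give
`m' = (1 - N)/3 + 8π r² (ρ + p_T) N / 3`, the terms with `1/f` cancelling. By the NEC `χ` is
antitone, and it tends to `0`, so `N ≤ 1` and `N` is monotone; hence `m` is monotone and `m ≤ M`.

The function `h = f e^{-χ} / r²` (`-g_tt` divided by `r²`) satisfies
`h' = 2 (3 m - r) N / r⁴ ≤ 2 (3 M - r) N / r⁴`. It vanishes at the horizon and at infinity and is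
positive in between, so `∫ (3 M - r) N r⁻⁴ dr ≥ 0`. Therefore `3 M > r_h`, and as `N` is monotone
while `3 M - r` changes sign at `3 M`, also `N(3M) ∫ (3 M - r) r⁻⁴ dr ≥ 0`. This last integral is
`M / r_h³ - 1 / (2 r_h²)`, whence `2 M ≥ r_h`. The integrals are replaced by the monotonicity of
`h - c (1/r² - 2 M / r³)`, with `c = 0` to get `3 M > r_h`, and then `c = N(3M)`.
-/

/-- A function with nonpositive derivative on an open half-line, continuous up to the endpoint, is
antitone on the closed half-line. -/
lemma antitoneOn_Ici_of_hasDerivAt {a : ℝ} {g g' : ℝ → ℝ}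
    (hc : ContinuousWithinAt g (Set.Ici a) a) (hd : ∀ x ∈ Set.Ioi a, HasDerivAt g (g' x) x)
    (hn : ∀ x ∈ Set.Ioi a, g' x ≤ 0) : AntitoneOn g (Set.Ici a) := by
  refine antitoneOn_of_hasDerivWithinAt_nonpos (f' := g') (convex_Ici a) ?_ ?_ ?_
  · intro x hx
    rcases eq_or_lt_of_le (Set.mem_Ici.1 hx) with rfl | h
    · exact hc
    · exact (hd x h).continuousAt.continuousWithinAt
  · intro x hx
    rw [interior_Ici] at hx
    exact (hd x hx).hasDerivWithinAt
  · intro x hx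
    rw [interior_Ici] at hx
    exact hn x hx

lemma antitoneOn_Ioi_of_hasDerivAt {a : ℝ} {g g' : ℝ → ℝ}
    (hd : ∀ x ∈ Set.Ioi a, HasDerivAt g (g' x) x)
    (hn : ∀ x ∈ Set.Ioi a, g' x ≤ 0) : AntitoneOn g (Set.Ioi a) := by
  refine antitoneOn_of_hasDerivWithinAt_nonpos (f' := g') (convex_Ioi a) ?_ ?_ ?_
  · exact fun x hx => (hd x hx).continuousAt.continuousWithinAt
  · intro x hx
    rw [interior_Ioi] at hx
    exact (hd x hx).hasDerivWithinAt
  · intro x hx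
    rw [interior_Ioi] at hx
    exact hn x hx

lemma AntitoneOn.le_of_tendsto_atTop {a l x : ℝ} {g : ℝ → ℝ} {s : Set ℝ} (hs : Set.Ioi a ⊆ s)
    (hg : AntitoneOn g s) (hl : Tendsto g atTop (nhds l)) (hx : x ∈ s) : l ≤ g x := by
  refine le_of_tendsto hl ?_
  filter_upwards [eventually_ge_atTop x, eventually_gt_atTop a] with y hy hya
  exact hg hx (hs hya) hy

/-- In the derivative of the quasi-local mass the `1/f` terms coming from `χ` and `p_r` cancel. -/
lemma hasDerivAt_mass {r : ℝ} (hr : 0 < r) {f χ ρ p_r p_T : ℝ → ℝ} (hf : 0 < f r)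
    (hf' : HasDerivAt f ((1 - 8 * π * r ^ 2 * ρ r - f r) / r) r)
    (hχ' : HasDerivAt χ (-(8 * π * r / f r) * (ρ r + p_r r)) r)
    (hp' : HasDerivAt p_r ((ρ r + 4 * p_T r - 3 * p_r r) / (2 * r) -
        (p_r r + ρ r) * (8 * π * p_r r * r ^ 2 + 1) / (2 * r * f r)) r) :
    HasDerivAt (fun x => (x * Real.exp (-χ x / 2) / 6) *
        (1 - 3 * f x + 8 * π * x ^ 2 * p_r x) + x / 3)
      ((1 - Real.exp (-χ r / 2)) / 3 +
        8 * π * r ^ 2 * (ρ r + p_T r) * Real.exp (-χ r / 2) / 3) r := by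
  have hN : HasDerivAt (fun x => Real.exp (-χ x / 2)) _ r := (hχ'.neg.div_const 2).exp
  have hx := hasDerivAt_id' r
  have hW : HasDerivAt (fun x => 1 - 3 * f x + 8 * π * x ^ 2 * p_r x) _ r :=
    ((hf'.const_mul 3).const_sub 1).add (((hx.pow 2).const_mul (8 * π)).mul hp')
  refine HasDerivAt.congr_deriv ((((hx.mul hN).div_const 6).mul hW).add (hx.div_const 3)) ?_
  simp only [Pi.mul_apply, Pi.pow_apply, Pi.neg_apply]
  field_simp
  ring

/-- The function `f e^{-χ} / r²` has derivative `2 (3 m - r) e^{-χ/2} / r⁴`, with `m` the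
quasi-local mass. -/
lemma hasDerivAt_lapse {r : ℝ} (hr : 0 < r) {f χ ρ p_r : ℝ → ℝ} (hf : 0 < f r)
    (hf' : HasDerivAt f ((1 - 8 * π * r ^ 2 * ρ r - f r) / r) r)
    (hχ' : HasDerivAt χ (-(8 * π * r / f r) * (ρ r + p_r r)) r) :
    HasDerivAt (fun x => f x * Real.exp (-χ x / 2) ^ 2 / x ^ 2)
      (2 * (3 * ((r * Real.exp (-χ r / 2) / 6) *
        (1 - 3 * f r + 8 * π * r ^ 2 * p_r r) + r / 3) - r) * Real.exp (-χ r / 2) / r ^ 4) r := by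
  have hN : HasDerivAt (fun x => Real.exp (-χ x / 2)) _ r := (hχ'.neg.div_const 2).exp
  have hx := hasDerivAt_id' r
  refine HasDerivAt.congr_deriv ((hf'.mul (hN.pow 2)).div (hx.pow 2) (pow_ne_zero 2 hr.ne')) ?_
  simp only [Pi.mul_apply, Pi.pow_apply, Pi.neg_apply]
  field_simp
  ring

lemma hasDerivAt_primitive {r : ℝ} (hr : 0 < r) (M : ℝ) :
    HasDerivAt (fun x : ℝ => 1 / x ^ 2 - 2 * M / x ^ 3) (2 * (3 * M - r) / r ^ 4) r := by
  have hx := hasDerivAt_id' r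
  refine HasDerivAt.congr_deriv ((((hasDerivAt_const r (1 : ℝ)).div (hx.pow 2) (pow_ne_zero 2 hr.ne'))).sub
    ((hasDerivAt_const r (2 * M)).div (hx.pow 3) (pow_ne_zero 3 hr.ne'))) ?_
  simp only [Pi.pow_apply]
  field_simp
  ring

/-- Static spherically symmetric black hole (units 16πG = c = 1): under the Einstein
equations with the NEC, asymptotic flatness (`f → 1`, `χ → 0`), ADM mass
`M = lim_{r→∞} m(r)`, and a regular horizon at `r_h` (`f(r_h) = 0`, NEC saturated there),
the Penrose inequality `2M ≥ √(𝒜/(4π))`, i.e. `2M ≥ r_h`, holds, where `𝒜 = 4π r_h²`. -/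
theorem penrose_static (r_h M 𝒜 fd : ℝ) (hr : 0 < r_h) (f χ ρ p_r p_T : ℝ → ℝ)
    (hf : ∀ r ∈ Set.Ioi r_h, 0 < f r)
    (hf' : ∀ r ∈ Set.Ioi r_h,
      HasDerivAt f ((1 - 8 * π * r ^ 2 * ρ r - f r) / r) r)
    (hχ' : ∀ r ∈ Set.Ioi r_h,
      HasDerivAt χ (-(8 * π * r / f r) * (ρ r + p_r r)) r)
    (hp' : ∀ r ∈ Set.Ioi r_h,
      HasDerivAt p_r ((ρ r + 4 * p_T r - 3 * p_r r) / (2 * r) -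
        (p_r r + ρ r) * (8 * π * p_r r * r ^ 2 + 1) / (2 * r * f r)) r)
    (hNEC₁ : ∀ r ∈ Set.Ioi r_h, 0 ≤ ρ r + p_r r)
    (hNEC₂ : ∀ r ∈ Set.Ioi r_h, 0 ≤ ρ r + p_T r)
    -- asymptotic flatness and ADM mass
    (hfinfty : Tendsto f atTop (nhds 1))
    (hχinfty : Tendsto χ atTop (nhds 0))
    (hM : Tendsto
      (fun x => (x * Real.exp (-χ x / 2) / 6) *
        (1 - 3 * f x + 8 * π * x ^ 2 * p_r x) + x / 3) atTop (nhds M))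
    -- regular horizon at r_h
    (hfc : ContinuousWithinAt f (Set.Ici r_h) r_h)
    (hχc : ContinuousWithinAt χ (Set.Ici r_h) r_h)
    (hρc : ContinuousWithinAt ρ (Set.Ici r_h) r_h)
    (hpc : ContinuousWithinAt p_r (Set.Ici r_h) r_h)
    (hfh : f r_h = 0)
    (hfd : HasDerivWithinAt f fd (Set.Ici r_h) r_h)
    (hNECh : ρ r_h + p_r r_h = 0)
    -- horizon area
    (h𝒜 : 𝒜 = 4 * π * r_h ^ 2) :
    2 * M ≥ Real.sqrt (𝒜 / (4 * π)) ∧ 2 * M ≥ r_h := by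
  have key : r_h ≤ 2 * M := by
    have hpos : ∀ r ∈ Set.Ioi r_h, 0 < r := fun r h => hr.trans h
    have hχanti : AntitoneOn χ (Set.Ioi r_h) := by
      refine antitoneOn_Ioi_of_hasDerivAt hχ' fun r h => ?_
      have h1 := hpos r h
      have h2 := hf r h
      have h3 := hNEC₁ r h
      have : 0 ≤ 8 * π * r / f r * (ρ r + p_r r) := by positivity
      linarith
    have hN1 : ∀ r ∈ Set.Ioi r_h, Real.exp (-χ r / 2) ≤ 1 := by
      intro r h
      have := hχanti.le_of_tendsto_atTop subset_rfl hχinfty h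
      exact Real.exp_le_one_iff.2 (by linarith)
    have hNmono : ∀ r ∈ Set.Ioi r_h, ∀ s ∈ Set.Ioi r_h, r ≤ s →
        Real.exp (-χ r / 2) ≤ Real.exp (-χ s / 2) := by
      intro r h s hs hrs
      have := hχanti h hs hrs
      exact Real.exp_le_exp.2 (by linarith)
    have hmM : ∀ r ∈ Set.Ioi r_h, (r * Real.exp (-χ r / 2) / 6) *
        (1 - 3 * f r + 8 * π * r ^ 2 * p_r r) + r / 3 ≤ M := by
      intro r h
      have hanti := antitoneOn_Ioi_of_hasDerivAt (a := r_h) (fun x hx =>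
        (hasDerivAt_mass (hpos x hx) (hf x hx) (hf' x hx) (hχ' x hx) (hp' x hx)).neg) (by
          intro x hx
          have h1 := hpos x hx
          have h2 := hNEC₂ x hx
          have h3 := hN1 x hx
          have : 0 ≤ 8 * π * x ^ 2 * (ρ x + p_T x) * Real.exp (-χ x / 2) / 3 := by positivity
          linarith)
      have hle := hanti.le_of_tendsto_atTop (l := -M) subset_rfl hM.neg h
      exact neg_le_neg_iff.1 hle
    have hhc : ContinuousWithinAt (fun x => f x * Real.exp (-χ x / 2) ^ 2 / x ^ 2)
        (Set.Ici r_h) r_h :=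
      (hfc.mul (((hχc.neg.div_const 2).rexp).pow 2)).div (continuousWithinAt_id.pow 2)
        (pow_ne_zero 2 hr.ne')
    have hhd : ∀ r ∈ Set.Ioi r_h, _ := fun r h =>
      hasDerivAt_lapse (hpos r h) (hf r h) (hf' r h) (hχ' r h)
    have h3M : r_h < 3 * M := by
      by_contra! hcon
      have hanti := antitoneOn_Ici_of_hasDerivAt hhc hhd (by
        intro r h
        have h1 := hpos r h
        have h2 := hmM r h
        have h3 : r_h < r := h
        have h4 := Real.exp_pos (-χ r / 2)
        refine div_nonpos_of_nonpos_of_nonneg ?_ (by positivity)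
        exact mul_nonpos_of_nonpos_of_nonneg (by linarith) h4.le)
      have hmem : r_h + 1 ∈ Set.Ioi r_h := lt_add_one r_h
      have h1 := hanti (Set.mem_Ici.2 le_rfl) (Set.mem_Ici.2 (lt_add_one r_h).le)
        (lt_add_one r_h).le
      have h2 := hf _ hmem
      have h3 := hpos _ hmem
      have : 0 < f (r_h + 1) * Real.exp (-χ (r_h + 1) / 2) ^ 2 / (r_h + 1) ^ 2 := by positivity
      simp only [hfh, zero_mul, zero_div] at h1
      linarith
    set N₀ := Real.exp (-χ (3 * M) / 2) with hN₀
    have hN₀pos : 0 < N₀ := Real.exp_pos _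
    have hanti := antitoneOn_Ici_of_hasDerivAt
      (hhc.sub (((hasDerivAt_primitive hr M).const_mul N₀).continuousAt.continuousWithinAt))
      (fun r h => (hhd r h).sub ((hasDerivAt_primitive (hpos r h) M).const_mul N₀)) (by
        intro r h
        have h1 := hpos r h
        have h2 := hmM r h
        have h4 := Real.exp_pos (-χ r / 2)
        rw [← mul_div_assoc, ← sub_div]
        refine div_nonpos_of_nonpos_of_nonneg ?_ (by positivity)
        have hstep := mul_le_mul_of_nonneg_right h2 h4.le
        -- `3 M - r` and `N - N₀` have opposite signs since `N` is monotone.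
        have hsign : (3 * M - r) * (Real.exp (-χ r / 2) - N₀) ≤ 0 := by
          rcases le_total r (3 * M) with hle | hle
          · have := hNmono r h _ h3M hle
            exact mul_nonpos_of_nonneg_of_nonpos (by linarith) (by linarith)
          · have := hNmono _ h3M r h hle
            exact mul_nonpos_of_nonpos_of_nonneg (by linarith) (by linarith)
        linarith)
    have hpow : ∀ (c : ℝ) (n : ℕ), n ≠ 0 → Tendsto (fun x : ℝ => c / x ^ n) atTop (nhds 0) :=
      fun c n hn => tendsto_const_nhds.div_atTop (tendsto_pow_atTop hn)
    have hNlim : Tendsto (fun x => Real.exp (-χ x / 2)) atTop (nhds (Real.exp (-0 / 2))) :=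
      (Real.continuous_exp.tendsto _).comp (hχinfty.neg.div_const 2)
    have hlim := ((hfinfty.mul (hNlim.pow 2)).div_atTop
      (tendsto_pow_atTop (α := ℝ) two_ne_zero)).sub
      (((hpow 1 2 two_ne_zero).sub (hpow (2 * M) 3 three_ne_zero)).const_mul N₀)
    have hfin := hanti.le_of_tendsto_atTop Set.Ioi_subset_Ici_self hlim (Set.mem_Ici.2 le_rfl)
    simp only [Pi.sub_apply, hfh, zero_mul, zero_div, sub_zero, mul_zero, zero_sub] at hfin
    have hP : 1 / r_h ^ 2 - 2 * M / r_h ^ 3 ≤ 0 := by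
      by_contra! hcon
      have := mul_pos hN₀pos hcon
      linarith
    have hfac : 1 / r_h ^ 2 - 2 * M / r_h ^ 3 = (r_h - 2 * M) / r_h ^ 3 := by
      field_simp
    rw [hfac] at hP
    by_contra! hcon
    have : 0 < (r_h - 2 * M) / r_h ^ 3 := div_pos (by linarith) (by positivity)
    linarith
  have hA : Real.sqrt (𝒜 / (4 * π)) = r_h := by
    have : 𝒜 / (4 * π) = r_h ^ 2 := by
      rw [h𝒜]
      field_simp
    rw [this, Real.sqrt_sq hr.le]
  rw [hA]
  exact ⟨key, key⟩
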